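/- arXiv:2204.02628 — 2 statements merged into one kernel-verified Lean document; each statement's English description precedes it below -/
import Mathlib

section
/- For each integer j ≥ 0 and n ≥ 1, let s(n,j) denote the coefficient of X^j in the polynomial X(X+1)(X+2)⋯(X+n−1) (the unsigned Stirling number of the first kind). Then for every fixed integer m ≥ 0: (i) s(n, n−m) · 2^m · m! / n^(2m) → 1 as n → ∞, and (ii) n · (1 − s(n, n−m) · 2^m · m! / n^(2m)) → (2m² + m)/3 as n → ∞. -/
/-- The unsigned Stirling number of the first kind `s(n,j)`: the coefficient of `X^j`
in `X (X+1) (X+2) ⋯ (X+n−1)`. -/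
noncomputable def stirling1 (n j : ℕ) : ℝ :=
  (∏ i ∈ Finset.range n, (Polynomial.X + Polynomial.C (i : ℝ))).coeff j

/-- Auxiliary recursion: `eAux n m = s(n, n-m)`. -/
def eAux : ℕ → ℕ → ℝ
  | _, 0 => 1
  | 0, _ + 1 => 0
  | n + 1, m + 1 => eAux n (m + 1) + n * eAux n m

lemma eAux_zero_right (n : ℕ) : eAux n 0 = 1 := by cases n <;> simp [eAux]

lemma eAux_succ (n m : ℕ) : eAux (n + 1) (m + 1) = eAux n (m + 1) + n * eAux n m := by
  simp [eAux]

lemma eAux_eq_zero (n : ℕ) : ∀ m, n < m → eAux n m = 0 := by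
  induction n with
  | zero => intro m hm; obtain ⟨k, rfl⟩ : ∃ k, m = k + 1 := ⟨m - 1, by omega⟩; simp [eAux]
  | succ n ih =>
    intro m hm
    obtain ⟨k, rfl⟩ : ∃ k, m = k + 1 := ⟨m - 1, by omega⟩
    rw [eAux_succ, ih _ (by omega), ih _ (by omega)]; simp

lemma stirling1_succ_zero (n : ℕ) : stirling1 (n + 1) 0 = n * stirling1 n 0 := by
  unfold stirling1
  rw [Finset.prod_range_succ, mul_add, Polynomial.coeff_add, Polynomial.coeff_mul_C,
    Polynomial.coeff_mul_X_zero]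
  ring

lemma stirling1_succ_succ (n j : ℕ) :
    stirling1 (n + 1) (j + 1) = stirling1 n j + n * stirling1 n (j + 1) := by
  unfold stirling1
  rw [Finset.prod_range_succ, mul_add, Polynomial.coeff_add, Polynomial.coeff_mul_C,
    Polynomial.coeff_mul_X]
  ring

lemma stirling1_eq (n : ℕ) : (∀ j, n < j → stirling1 n j = 0) ∧
    ∀ j m, j + m = n → stirling1 n j = eAux n m := by
  induction n with
  | zero =>
    constructor
    · intro j hj
      simp [stirling1, Polynomial.coeff_one, hj.ne']
    · intro j m h
      obtain ⟨rfl, rfl⟩ : j = 0 ∧ m = 0 := by omega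
      simp [stirling1, eAux]
  | succ n ih =>
    obtain ⟨h0, h1⟩ := ih
    constructor
    · intro j hj
      obtain ⟨k, rfl⟩ : ∃ k, j = k + 1 := ⟨j - 1, by omega⟩
      rw [stirling1_succ_succ, h0 _ (by omega), h0 _ (by omega)]; simp
    · intro j m h
      rcases j with _ | j
      · obtain rfl : m = n + 1 := by omega
        rw [stirling1_succ_zero, eAux_succ, eAux_eq_zero n (n + 1) (by omega),
          h1 0 n (by omega), zero_add]
      · rw [stirling1_succ_succ]
        rcases m with _ | m
        · rw [h0 (j + 1) (by omega), h1 j 0 (by omega), eAux_zero_right, eAux_zero_right]; simp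
        · rw [eAux_succ, h1 j (m + 1) (by omega), h1 (j + 1) m (by omega)]

lemma mul_choose_eq (n j : ℕ) : (n : ℝ) * (n.choose j : ℝ) =
    (j + 1) * (n.choose (j + 1) : ℝ) + j * (n.choose j : ℝ) := by
  rcases le_or_gt j n with h | h
  · have := Nat.choose_succ_right_eq n j
    have h2 : (n.choose (j + 1) : ℝ) * (j + 1) = n.choose j * ((n : ℝ) - j) := by
      rw [← Nat.cast_sub h]; exact_mod_cast this
    linarith
  · simp [Nat.choose_eq_zero_of_lt h, Nat.choose_eq_zero_of_lt (Nat.lt_succ_of_lt h)]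

lemma choose_succ_cast (n j : ℕ) : ((n + 1).choose (j + 1) : ℝ) =
    n.choose j + n.choose (j + 1) := by
  exact_mod_cast Nat.choose_succ_succ n j

/-- Two leading terms in the binomial basis, with crude remainder bound. -/
lemma eAux_expansion (m : ℕ) : ∃ A B K : ℝ, 0 ≤ K ∧
    2 ^ (m + 1) * ((m + 1).factorial : ℝ) * A = ((2 * m + 2).factorial : ℝ) ∧
    2 ^ (m + 1) * ((m + 1).factorial : ℝ) * B
      = ((2 * m + 1).factorial : ℝ) * (4 * (m + 1) * m / 3) ∧
    ∀ n : ℕ, |eAux n (m + 1) - A * (n.choose (2 * m + 2) : ℝ) - B * (n.choose (2 * m + 1) : ℝ)|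
      ≤ K * (n : ℝ) ^ (2 * m) := by
  induction m with
  | zero =>
    refine ⟨1, 0, 0, le_rfl, by norm_num [Nat.factorial], by norm_num, ?_⟩
    intro n
    have : eAux n 1 = n.choose 2 := by
      induction n with
      | zero => simp [eAux]
      | succ n ih =>
        rw [eAux_succ, ih, eAux_zero_right, choose_succ_cast n 1]; simp; ring
    simp [this]
  | succ m ih =>
    obtain ⟨A, B, K, hK, hA, hB, h⟩ := ih
    refine ⟨(2 * m + 3) * A, (2 * m + 2) * (A + B), K + |B| * (2 * m + 1), by positivity, ?_, ?_, ?_⟩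
    · rw [show 2 * (m + 1) + 2 = (2 * m + 2) + 1 + 1 by ring, Nat.factorial_succ (2 * m + 2 + 1),
        Nat.factorial_succ (2 * m + 2), Nat.factorial_succ (m + 1)]
      push_cast
      rw [← hA]; ring
    · rw [show 2 * (m + 1) + 1 = (2 * m + 1) + 1 + 1 by ring, Nat.factorial_succ (2 * m + 1 + 1),
        Nat.factorial_succ (2 * m + 1), Nat.factorial_succ (m + 1)]
      rw [show 2 * m + 2 = (2 * m + 1) + 1 by ring, Nat.factorial_succ (2 * m + 1)] at hA
      push_cast at hA ⊢
      linear_combination (2 * (m + 2) * (2 * m + 2) : ℝ) * hA + (2 * (m + 2) * (2 * m + 2) : ℝ) * hB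
    · intro n
      -- the remainder is a sum of the previous remainders plus a binomial
      have key : ∀ n : ℕ, |eAux n (m + 1 + 1) - (2 * m + 3) * A * (n.choose (2 * m + 4) : ℝ)
          - (2 * m + 2) * (A + B) * (n.choose (2 * m + 3) : ℝ)
          - B * (2 * m + 1) * (n.choose (2 * m + 2) : ℝ)| ≤ K * (n : ℝ) ^ (2 * m + 2) := by
        intro n
        induction n with
        | zero => simp [eAux]
        | succ n ihn =>
          have hn := h n
          have e1 := mul_choose_eq n (2 * m + 2)
          have e2 := mul_choose_eq n (2 * m + 1)
          have c1 := choose_succ_cast n (2 * m + 3)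
          have c2 := choose_succ_cast n (2 * m + 2)
          have c3 := choose_succ_cast n (2 * m + 1)
          push_cast at e1 e2
          have heq : eAux (n + 1) (m + 1 + 1)
              - (2 * m + 3) * A * ((n + 1).choose (2 * m + 4) : ℝ)
              - (2 * m + 2) * (A + B) * ((n + 1).choose (2 * m + 3) : ℝ)
              - B * (2 * m + 1) * ((n + 1).choose (2 * m + 2) : ℝ)
            = (eAux n (m + 1 + 1) - (2 * m + 3) * A * (n.choose (2 * m + 4) : ℝ)
              - (2 * m + 2) * (A + B) * (n.choose (2 * m + 3) : ℝ)
              - B * (2 * m + 1) * (n.choose (2 * m + 2) : ℝ))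
            + n * (eAux n (m + 1) - A * (n.choose (2 * m + 2) : ℝ)
              - B * (n.choose (2 * m + 1) : ℝ)) := by
            rw [eAux_succ, c1, c2, c3]
            linear_combination A * e1 + B * e2
          rw [heq]
          refine (abs_add_le _ _).trans ?_
          rw [abs_mul, Nat.abs_cast]
          have h1 : (n : ℝ) * |eAux n (m + 1) - A * (n.choose (2 * m + 2) : ℝ)
              - B * (n.choose (2 * m + 1) : ℝ)| ≤ n * (K * (n : ℝ) ^ (2 * m)) := by gcongr
          have hp : (n : ℝ) ^ (2 * m) ≤ ((n : ℝ) + 1) ^ (2 * m) := by gcongr; linarith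
          have hp0 : (0 : ℝ) ≤ (n : ℝ) ^ (2 * m) := by positivity
          have hn0 : (0 : ℝ) ≤ n := by positivity
          have h2 : (n : ℝ) ^ (2 * m + 2) + n * (n : ℝ) ^ (2 * m) ≤ ((n : ℝ) + 1) ^ (2 * m + 2) := by
            rw [pow_add, pow_add ((n : ℝ) + 1)]
            calc (n : ℝ) ^ (2 * m) * (n : ℝ) ^ 2 + n * (n : ℝ) ^ (2 * m)
                ≤ (n : ℝ) ^ (2 * m) * ((n : ℝ) + 1) ^ 2 := by nlinarith
              _ ≤ _ := by gcongr
          push_cast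
          nlinarith [mul_le_mul_of_nonneg_left h2 hK]
      have hk := key n
      have hc : (n.choose (2 * m + 2) : ℝ) ≤ (n : ℝ) ^ (2 * m + 2) := by
        exact_mod_cast Nat.choose_le_pow n (2 * m + 2)
      have hb : |B * (2 * m + 1) * (n.choose (2 * m + 2) : ℝ)|
          ≤ |B| * (2 * m + 1) * (n : ℝ) ^ (2 * m + 2) := by
        rw [abs_mul, abs_mul, Nat.abs_cast, abs_of_nonneg (by positivity : (0 : ℝ) ≤ 2 * m + 1)]
        gcongr
      have := (abs_add_le _ _).trans (add_le_add hk hb)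
      rw [sub_add_cancel] at this
      rw [show 2 * (m + 1) + 2 = 2 * m + 4 by ring, show 2 * (m + 1) + 1 = 2 * m + 3 by ring,
        show 2 * (m + 1) = 2 * m + 2 by ring, add_mul K]
      exact this

open Filter in
lemma tendsto_one_of_tendsto (q : ℕ → ℝ) (L : ℝ)
    (h : Tendsto (fun n : ℕ => (n : ℝ) * (1 - q n)) atTop (nhds L)) :
    Tendsto q atTop (nhds 1) := by
  have h2 := (tendsto_const_nhds (x := (1 : ℝ))).sub
    (h.mul (tendsto_inv_atTop_nhds_zero_nat (𝕜 := ℝ)))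
  rw [mul_zero, sub_zero] at h2
  refine h2.congr' ?_
  filter_upwards [eventually_gt_atTop 0] with n hn
  have : (n : ℝ) ≠ 0 := by positivity
  field_simp
  ring

open Filter in
lemma tendsto_descFactorial (k : ℕ) :
    Tendsto (fun n : ℕ => (n : ℝ) * (1 - (n.descFactorial k : ℝ) / (n : ℝ) ^ k)) atTop
      (nhds ((k : ℝ) * (k - 1) / 2)) := by
  induction k with
  | zero => simp
  | succ k ih =>
    have h2 := ih.add ((tendsto_one_of_tendsto _ _ ih).const_mul (k : ℝ))
    rw [show ((k + 1 : ℕ) : ℝ) * ((k + 1 : ℕ) - 1) / 2 = (k : ℝ) * (k - 1) / 2 + k * 1 by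
      push_cast; ring]
    refine h2.congr' ?_
    filter_upwards [eventually_gt_atTop 0, eventually_ge_atTop k] with n hn hk
    have : (n : ℝ) ≠ 0 := by positivity
    rw [Nat.descFactorial_succ]
    push_cast [hk]
    field_simp
    ring

open Filter in
lemma eAux_tendsto (m : ℕ) :
    Tendsto (fun n : ℕ => (n : ℝ) *
        (1 - eAux n m * 2 ^ m * (m.factorial : ℝ) / (n : ℝ) ^ (2 * m)))
      atTop (nhds ((2 * (m : ℝ) ^ 2 + m) / 3)) := by
  rcases m with _ | m
  · simp [eAux_zero_right]
  obtain ⟨A, B, K, hK, hA, hB, h⟩ := eAux_expansion m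
  set T : ℝ := 2 ^ (m + 1) * ((m + 1).factorial : ℝ) with hT
  set r : ℕ → ℝ := fun n => eAux n (m + 1) - A * (n.choose (2 * m + 2) : ℝ)
    - B * (n.choose (2 * m + 1) : ℝ) with hr
  have hr0 : Tendsto (fun n : ℕ => r n / (n : ℝ) ^ (2 * m + 1)) atTop (nhds 0) := by
    have hz : Tendsto (fun n : ℕ => K * (n : ℝ)⁻¹) atTop (nhds 0) := by
      simpa using (tendsto_inv_atTop_nhds_zero_nat (𝕜 := ℝ)).const_mul K
    refine squeeze_zero_norm' ?_ hz
    filter_upwards [eventually_gt_atTop 0] with n hn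
    have hn' : (0 : ℝ) < n := by positivity
    rw [Real.norm_eq_abs, abs_div, abs_of_pos (by positivity : (0 : ℝ) < (n : ℝ) ^ (2 * m + 1)),
      div_le_iff₀ (by positivity)]
    refine (h n).trans (le_of_eq ?_)
    rw [pow_succ]; field_simp
  have h1 := tendsto_descFactorial (2 * m + 2)
  have h2 := tendsto_one_of_tendsto _ _ (tendsto_descFactorial (2 * m + 1))
  have h3 := (h1.sub (h2.const_mul (4 * ((m : ℝ) + 1) * m / 3))).sub (hr0.const_mul T)
  have hL : (2 * ((m + 1 : ℕ) : ℝ) ^ 2 + (m + 1 : ℕ)) / 3 =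
      ((2 * m + 2 : ℕ) : ℝ) * ((2 * m + 2 : ℕ) - 1) / 2 - 4 * ((m : ℝ) + 1) * m / 3 * 1 - T * 0 := by
    push_cast; ring
  rw [hL]
  refine h3.congr' ?_
  filter_upwards [eventually_gt_atTop 0] with n hn
  have hn' : (n : ℝ) ≠ 0 := by positivity
  have he : eAux n (m + 1) * 2 ^ (m + 1) * ((m + 1).factorial : ℝ) =
      (n.descFactorial (2 * m + 2) : ℝ)
      + (4 * ((m : ℝ) + 1) * m / 3) * (n.descFactorial (2 * m + 1) : ℝ) + T * r n := by
    rw [Nat.descFactorial_eq_factorial_mul_choose, Nat.descFactorial_eq_factorial_mul_choose]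
    push_cast
    simp only [hr]
    linear_combination (n.choose (2 * m + 2) : ℝ) * hA
      + (n.choose (2 * m + 1) : ℝ) * hB - eAux n (m + 1) * hT
  rw [he, show 2 * (m + 1) = 2 * m + 1 + 1 by ring, show 2 * m + 2 = 2 * m + 1 + 1 by ring,
    pow_succ (n : ℝ) (2 * m + 1)]
  field_simp
  ring

/-- For every fixed `m ≥ 0`:
(i) `s(n, n−m) 2^m m! / n^(2m) → 1` as `n → ∞`, and
(ii) `n (1 − s(n, n−m) 2^m m! / n^(2m)) → (2m² + m)/3` as `n → ∞`. -/
theorem stirling1_asymptotic (m : ℕ) :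
    Filter.Tendsto
      (fun n : ℕ => stirling1 n (n - m) * 2 ^ m * (m.factorial : ℝ) / (n : ℝ) ^ (2 * m))
      Filter.atTop (nhds 1) ∧
    Filter.Tendsto
      (fun n : ℕ => (n : ℝ) *
        (1 - stirling1 n (n - m) * 2 ^ m * (m.factorial : ℝ) / (n : ℝ) ^ (2 * m)))
      Filter.atTop (nhds ((2 * (m : ℝ) ^ 2 + m) / 3)) := by
  have h : Filter.Tendsto
      (fun n : ℕ => (n : ℝ) *
        (1 - stirling1 n (n - m) * 2 ^ m * (m.factorial : ℝ) / (n : ℝ) ^ (2 * m)))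
      Filter.atTop (nhds ((2 * (m : ℝ) ^ 2 + m) / 3)) := by
    refine (eAux_tendsto m).congr' ?_
    filter_upwards [Filter.eventually_ge_atTop m] with n hn
    rw [(stirling1_eq n).2 (n - m) m (by omega)]
  exact ⟨tendsto_one_of_tendsto _ _ h, h⟩
end

section
/- Fix an integer k ≥ 1 and apply the construction in the context with f = χ_k, M = 4k+2, ν = 0, a = k², and b = 2k+1, obtaining the sequence ξ(n). Then ξ(n) > 0 for every integer n ≥ 0. -/
/-- The Fourier coefficient `G_f^{(ν)}(k)` of a function `f : ℤ → ℝ` of period `M`. -/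
noncomputable def Gf (M : ℕ) (f : ℤ → ℝ) (ν : ℕ) (k : ℕ) : ℝ :=
  if ν = 0 then
    (2 / Real.sqrt M) * ∑ m ∈ Finset.range M, f m * Real.sin (2 * Real.pi * m * k / M)
  else
    (2 / Real.sqrt M) * ∑ m ∈ Finset.range M, f m * Real.cos (2 * Real.pi * m * k / M)

/-- `C_n = (−1)^(n+1) (M^(2n+ν)/(2n+ν+1)) ∑_{m=1}^M f(m) B_{2n+ν+1}(m/M)`. -/
noncomputable def Cf (M : ℕ) (f : ℤ → ℝ) (ν : ℕ) (n : ℕ) : ℝ :=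
  (-1) ^ (n + 1) * ((M : ℝ) ^ (2 * n + ν) / (2 * n + ν + 1)) *
    ∑ m ∈ Finset.Icc 1 M,
      f m * (((Polynomial.bernoulli (2 * n + ν + 1)).eval ((m : ℚ) / (M : ℚ)) : ℚ) : ℝ)

/-- `D_n = b^(−n) ∑_{k=0}^n C(n,k) a^(n−k) C_k`. -/
noncomputable def Df (M : ℕ) (f : ℤ → ℝ) (ν a b : ℕ) (n : ℕ) : ℝ :=
  ((b : ℝ) ^ n)⁻¹ *
    ∑ k ∈ Finset.range (n + 1), (n.choose k : ℝ) * (a : ℝ) ^ (n - k) * Cf M f ν k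

/-- `ξ(0) = D_0` and `ξ(n) = (1/n!) ∑_{m=0}^{n−1} s(n, n−m) D_{n−m}` for `n ≥ 1`. -/
noncomputable def xif (M : ℕ) (f : ℤ → ℝ) (ν a b : ℕ) : ℕ → ℝ
  | 0 => Df M f ν a b 0
  | n + 1 => (1 / ((n + 1).factorial : ℝ)) *
      ∑ m ∈ Finset.range (n + 1), stirling1 (n + 1) (n + 1 - m) * Df M f ν a b (n + 1 - m)

/-- The odd periodic function `χ_k` of period `4k+2` with `χ_k(n) = 1` for
`n ≡ k, k+1 (mod 4k+2)`, `χ_k(n) = −1` for `n ≡ −k, −k−1 (mod 4k+2)`, and `0` otherwise. -/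
noncomputable def chiK (k : ℕ) (n : ℤ) : ℝ :=
  if n % (4 * k + 2) = (k : ℤ) % (4 * k + 2) ∨
      n % (4 * k + 2) = ((k : ℤ) + 1) % (4 * k + 2) then 1
  else if n % (4 * k + 2) = (-(k : ℤ)) % (4 * k + 2) ∨
      n % (4 * k + 2) = (-(k : ℤ) - 1) % (4 * k + 2) then -1
  else 0

theorem bern_sign (n : ℕ) : ∀ x : ℝ, 0 < x → x < 2⁻¹ →
    0 < (-1) ^ (n + 1) * bernoulliFun (2 * n + 1) x := by
  induction n with
  | zero =>
    intro x h0 h1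
    simp only [mul_zero, zero_add, bernoulliFun_one]
    norm_num at h1 ⊢
    linarith
  | succ n ih =>
    intro x h0 h1
    have hd : ∀ y, HasDerivAt (fun x => (-1 : ℝ) ^ (n + 1 + 1) * bernoulliFun (2 * (n + 1) + 1) x)
        ((-1 : ℝ) ^ (n + 1 + 1) * ((2 * n + 3) * bernoulliFun (2 * n + 2) y)) y := by
      intro y
      have := (hasDerivAt_bernoulliFun (2 * (n + 1) + 1) y).const_mul ((-1 : ℝ) ^ (n + 1 + 1))
      refine this.congr_deriv ?_
      rw [show 2 * (n + 1) + 1 - 1 = 2 * n + 2 by omega]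
      push_cast; ring
    have hd2 : ∀ y, HasDerivAt
        (fun y => (-1 : ℝ) ^ (n + 1 + 1) * ((2 * n + 3) * bernoulliFun (2 * n + 2) y))
        ((-1 : ℝ) ^ (n + 1 + 1) * ((2 * n + 3) * ((2 * n + 2) * bernoulliFun (2 * n + 1) y))) y := by
      intro y
      have := ((hasDerivAt_bernoulliFun (2 * n + 2) y).const_mul ((2 : ℝ) * n + 3)).const_mul
        ((-1 : ℝ) ^ (n + 1 + 1))
      refine this.congr_deriv ?_
      rw [show 2 * n + 2 - 1 = 2 * n + 1 by omega]
      push_cast; ring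
    have hc : StrictConcaveOn ℝ (Set.Icc (0 : ℝ) 2⁻¹)
        (fun x => (-1 : ℝ) ^ (n + 1 + 1) * bernoulliFun (2 * (n + 1) + 1) x) := by
      apply strictConcaveOn_of_deriv2_neg (convex_Icc _ _)
      · exact fun y _ => (hd y).continuousAt.continuousWithinAt
      · intro y hy
        rw [interior_Icc] at hy
        have h := ih y hy.1 hy.2
        simp only [Function.iterate_succ, Function.iterate_zero, Function.comp, id]
        rw [show deriv (fun x => (-1 : ℝ) ^ (n + 1 + 1) * bernoulliFun (2 * (n + 1) + 1) x) = _
          from funext fun y => (hd y).deriv, (hd2 y).deriv]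
        have : (0 : ℝ) < (2 * n + 3) * (2 * n + 2) := by positivity
        have := mul_pos this h
        rw [pow_succ (-1 : ℝ) (n + 1)]
        linarith
    have h := hc.lt_on_openSegment (x := 0) (y := 2⁻¹) (z := x) (by norm_num) (by norm_num)
      (by norm_num) (by rw [openSegment_eq_Ioo (by norm_num)]; exact ⟨h0, h1⟩)
    simp only [bernoulliFun_eval_half_eq_zero, bernoulliFun_eval_zero] at h
    rw [bernoulli_eq_zero_of_odd ⟨n + 1, rfl⟩ (by omega)] at h
    simpa using h

theorem eval_cast_eq (j : ℕ) (q : ℚ) :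
    (((Polynomial.bernoulli j).eval q : ℚ) : ℝ) = bernoulliFun j (q : ℝ) := by
  rw [bernoulliFun, Polynomial.eval_map]
  exact (Polynomial.eval₂_at_apply (algebraMap ℚ ℝ) q).symm

theorem chiK_eq (k : ℕ) (hk : 1 ≤ k) (m : ℕ) (h1 : 1 ≤ m) (h2 : m ≤ 4 * k + 2) :
    chiK k m = (if m = k then 1 else 0) + (if m = k + 1 then 1 else 0)
      - (if m = 3 * k + 1 then 1 else 0) - (if m = 3 * k + 2 then 1 else 0) := by
  unfold chiK
  have e1 : (k : ℤ) % (4 * k + 2) = k := Int.emod_eq_of_lt (by omega) (by omega)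
  have e2 : ((k : ℤ) + 1) % (4 * k + 2) = k + 1 := Int.emod_eq_of_lt (by omega) (by omega)
  have e3 : (-(k : ℤ)) % (4 * k + 2) = 3 * k + 2 := by
    rw [← Int.add_emod_right, Int.emod_eq_of_lt (by omega) (by omega)]; ring
  have e4 : (-(k : ℤ) - 1) % (4 * k + 2) = 3 * k + 1 := by
    rw [← Int.add_emod_right, Int.emod_eq_of_lt (by omega) (by omega)]; ring
  rw [e1, e2, e3, e4]
  have e5 : (m : ℤ) % (4 * k + 2) = if m = 4 * k + 2 then 0 else (m : ℤ) := by
    split_ifs with h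
    · rw [h]; push_cast; exact Int.emod_self
    · exact Int.emod_eq_of_lt (by omega) (by omega)
  rw [e5]
  split_ifs <;> first | (exfalso; omega) | norm_num

theorem Cf_pos (k : ℕ) (hk : 1 ≤ k) (n : ℕ) : 0 < Cf (4 * k + 2) (chiK k) 0 n := by
  unfold Cf
  simp only [eval_cast_eq, add_zero]
  have hk' : (1 : ℝ) ≤ k := by exact_mod_cast hk
  rw [Finset.sum_congr rfl (fun m hm => by
    rw [chiK_eq k hk m (Finset.mem_Icc.1 hm).1 (Finset.mem_Icc.1 hm).2])]
  simp only [sub_mul, add_mul, Finset.sum_add_distrib, Finset.sum_sub_distrib, ite_mul, one_mul,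
    zero_mul, Finset.sum_ite_eq', Finset.mem_Icc]
  rw [if_pos (by omega), if_pos (by omega), if_pos (by omega), if_pos (by omega)]
  push_cast
  have hM : (0 : ℝ) < 4 * k + 2 := by positivity
  have r1 : ((3 * k + 1 : ℝ)) / (4 * k + 2) = 1 - (k + 1) / (4 * k + 2) := by field_simp; ring
  have r2 : ((3 * k + 2 : ℝ)) / (4 * k + 2) = 1 - k / (4 * k + 2) := by field_simp; ring
  rw [r1, r2, bernoulliFun_eval_one_sub, bernoulliFun_eval_one_sub]
  have p1 := bern_sign n (k / (4 * k + 2)) (by positivity) (by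
    rw [div_lt_iff₀ hM]; linarith)
  have p2 := bern_sign n ((k + 1) / (4 * k + 2)) (by positivity) (by
    rw [div_lt_iff₀ hM]; linarith)
  have ho : (-1 : ℝ) ^ (2 * n + 1) = -1 := Odd.neg_one_pow ⟨n, rfl⟩
  rw [ho]
  have hq : (0 : ℝ) < (4 * k + 2) ^ (2 * n) / (2 * n + 1) := by positivity
  have := mul_pos hq (add_pos p1 p2)
  rw [add_zero]
  generalize (4 * (k : ℝ) + 2) ^ (2 * n) / (2 * n + 1) = Q at *
  linarith

theorem Df_pos (k : ℕ) (hk : 1 ≤ k) (n : ℕ) :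
    0 < Df (4 * k + 2) (chiK k) 0 (k ^ 2) (2 * k + 1) n := by
  unfold Df
  apply mul_pos (by positivity)
  apply Finset.sum_pos
  · intro i hi
    have h1 : 0 < n.choose i := Nat.choose_pos (by simpa [Nat.lt_succ_iff] using hi)
    have h2 := Cf_pos k hk i
    positivity
  · simp

theorem stirling1_sign (n : ℕ) : (∀ j, 0 ≤ stirling1 n j) ∧ 0 < stirling1 n n := by
  unfold stirling1
  induction n with
  | zero =>
    refine ⟨fun j => ?_, by simp⟩
    simp only [Finset.range_zero, Finset.prod_empty, Polynomial.coeff_one]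
    split_ifs <;> norm_num
  | succ n ih =>
    obtain ⟨h1, h2⟩ := ih
    simp only [Finset.prod_range_succ, mul_add, Polynomial.coeff_add, Polynomial.coeff_mul_C]
    constructor
    · intro j
      apply add_nonneg
      · cases j with
        | zero => simp
        | succ j => rw [Polynomial.coeff_mul_X]; exact h1 j
      · exact mul_nonneg (h1 j) (by positivity)
    · rw [Polynomial.coeff_mul_X]
      exact add_pos_of_pos_of_nonneg h2 (mul_nonneg (h1 _) (by positivity))

/-- The coefficients `ξ_{𝒢_k}(n)` of `𝒢_k(1−q)` (given by the
construction with `f = χ_k`, `M = 4k+2`, `ν = 0`, `a = k²`, `b = 2k+1`) are positive. -/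
theorem xif_chiK_pos (k : ℕ) (hk : 1 ≤ k) :
    ∀ n : ℕ, 0 < xif (4 * k + 2) (chiK k) 0 (k ^ 2) (2 * k + 1) n := by
  intro n
  cases n with
  | zero => exact Df_pos k hk 0
  | succ n =>
    unfold xif
    apply mul_pos (by positivity)
    apply Finset.sum_pos'
    · intro i _
      exact mul_nonneg ((stirling1_sign _).1 _) (Df_pos k hk _).le
    · refine ⟨0, by simp, ?_⟩
      exact mul_pos (stirling1_sign (n + 1)).2 (Df_pos k hk _)
end
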